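/- arXiv:1207.3553 — 7 statements merged into one kernel-verified Lean document; each statement's English description precedes it below -/
import Mathlib

section
/- (Anti-calculus proposition, maximum case) Let R > 0 and let f be analytic on an open set containing the closed disk D̄(0;R) = {z : |z| ≤ R}, with f non-constant on that open connected neighborhood. Suppose α ∈ ℂ with |α| = R is a point of maximum of |f| over D̄(0;R), i.e., |f(z)| ≤ |f(α)| for all z with |z| ≤ R. Then f'(α) ≠ 0. -/
theorem harnack_aux (R : ℝ) (hR : 0 < R) (p : ℂ → ℂ)
    (hp : DifferentiableOn ℂ p (Metric.ball 0 R))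
    (hre : ∀ z, ‖z‖ < R → 0 ≤ (p z).re) (h0 : 0 < (p 0).re) (z : ℂ) (hz : ‖z‖ < R) :
    (R - ‖z‖) * ‖p 0‖ ≤ 2 * R * ‖p z‖ := by
  have hne : ∀ w, ‖w‖ < R → p w + (starRingEnd ℂ) (p 0) ≠ 0 := by
    intro w hw h
    have h1 := congrArg Complex.re h
    simp at h1
    linarith [hre w hw]
  have hle : ∀ w, ‖w‖ < R → ‖p w - p 0‖ ≤ ‖p w + (starRingEnd ℂ) (p 0)‖ := by
    intro w hw
    rw [← sq_le_sq₀ (by positivity) (by positivity)]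
    simp only [Complex.sq_norm, Complex.normSq_apply, Complex.sub_re, Complex.sub_im,
      Complex.add_re, Complex.add_im, Complex.conj_re, Complex.conj_im]
    nlinarith [mul_nonneg (hre w hw) h0.le]
  have key := Complex.dist_le_div_mul_dist_of_mapsTo_ball
    (f := fun w => (p w - p 0) / (p w + (starRingEnd ℂ) (p 0))) (c := 0) (R₁ := R) (R₂ := 1)
    (z := z) ?_ ?_ (by simpa using hz)
  · simp only [sub_self, zero_div, dist_zero_right, norm_div] at key
    have hpos : 0 < ‖p z + (starRingEnd ℂ) (p 0)‖ := norm_pos_iff.mpr (hne z hz)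
    rw [div_le_iff₀ hpos] at key
    have h1 : ‖p z + (starRingEnd ℂ) (p 0)‖ ≤ ‖p z‖ + ‖p 0‖ := by
      simpa using norm_add_le (p z) ((starRingEnd ℂ) (p 0))
    have h2 : ‖p 0‖ - ‖p z‖ ≤ ‖p z - p 0‖ := by
      rw [norm_sub_rev]; exact norm_sub_norm_le _ _
    have h3 : R * ‖p z - p 0‖ ≤ ‖z‖ * ‖p z + (starRingEnd ℂ) (p 0)‖ := by
      calc R * ‖p z - p 0‖ ≤ R * (1 / R * ‖z‖ * ‖p z + (starRingEnd ℂ) (p 0)‖) := by gcongr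
        _ = _ := by field_simp
    nlinarith [mul_le_mul_of_nonneg_left h1 (norm_nonneg z), mul_le_mul_of_nonneg_left h2 hR.le,
      mul_le_mul_of_nonneg_right hz.le (norm_nonneg (p z))]
  · exact (hp.sub_const _).div (hp.add_const _) (fun w hw => hne w (by simpa using hw))
  · intro w hw
    have hw' : ‖w‖ < R := by simpa using hw
    simp only [sub_self, zero_div, Metric.mem_closedBall, dist_zero_right, norm_div]
    exact div_le_one_of_le₀ (hle w hw') (norm_nonneg _)

open Metric in
/-- Anti-calculus proposition (maximum case): if `f` is analytic and non-constant
on an open connected set `Ω` containing the closed disk `D̄(0;R)` and `|f|`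
attains its maximum over `D̄(0;R)` at a point `α` with `|α| = R`, then `f'(α) ≠ 0`. -/
theorem anti_calculus_max (R : ℝ) (hR : 0 < R) (Ω : Set ℂ) (hΩ : IsOpen Ω)
    (hconn : IsConnected Ω) (hsub : closedBall (0 : ℂ) R ⊆ Ω)
    (f : ℂ → ℂ) (hf : AnalyticOn ℂ f Ω)
    (hnc : ¬ ∃ c : ℂ, ∀ z ∈ Ω, f z = c)
    (α : ℂ) (hα : ‖α‖ = R)
    (hmax : ∀ z : ℂ, ‖z‖ ≤ R → ‖f z‖ ≤ ‖f α‖) :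
    deriv f α ≠ 0 := by
  intro hd
  have hN : AnalyticOnNhd ℂ f Ω := hΩ.analyticOn_iff_analyticOnNhd.mp hf
  have hαΩ : α ∈ Ω := hsub (by simp [hα])
  have h0Ω : (0 : ℂ) ∈ Ω := hsub (by simp [hR.le])
  have hdiff : DifferentiableOn ℂ f (ball 0 R) :=
    hN.differentiableOn.mono (ball_subset_closedBall.trans hsub)
  have hball : ball (0 : ℂ) R ∈ nhds (0 : ℂ) := ball_mem_nhds _ hR
  -- `f` is not constant on the disk
  have hconst : ∀ c : ℂ, ¬ ∀ z ∈ ball (0 : ℂ) R, f z = c := by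
    intro c hc
    refine hnc ⟨c, fun z hz => ?_⟩
    exact hN.eqOn_of_preconnected_of_eventuallyEq (g := fun _ => c) analyticOnNhd_const
      hconn.isPreconnected h0Ω (Filter.eventually_of_mem hball hc) hz
  have hfα : f α ≠ 0 := by
    intro h
    refine hconst 0 fun z hz => ?_
    have := hmax z (by simpa using (mem_ball_zero_iff.mp hz).le)
    simpa [h] using this
  have hMpos : 0 < ‖f α‖ := norm_pos_iff.mpr hfα
  have hg : ∀ z, ‖z‖ < R → ‖f z / f α‖ ≤ 1 := fun z hz => by
    rw [norm_div]; exact div_le_one_of_le₀ (hmax z hz.le) (norm_nonneg _)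
  let p : ℂ → ℂ := fun z => 1 - f z / f α
  have hre : ∀ z, ‖z‖ < R → 0 ≤ (p z).re := fun z hz => by
    have := (Complex.re_le_norm (f z / f α)).trans (hg z hz)
    simp only [p, Complex.sub_re, Complex.one_re]; linarith
  have h0 : 0 < (p 0).re := by
    refine lt_of_le_of_ne (hre 0 (by simpa using hR)) fun h => ?_
    have h1 : (f 0 / f α).re = 1 := by
      simp only [p, Complex.sub_re, Complex.one_re] at h; linarith
    have h2 : 1 ≤ ‖f 0 / f α‖ := h1 ▸ Complex.re_le_norm _
    rw [norm_div, le_div_iff₀ hMpos, one_mul] at h2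
    refine hconst (f 0) fun z hz => ?_
    exact Complex.eqOn_of_isPreconnected_of_isMaxOn_norm (convex_ball (0 : ℂ) R).isPreconnected
      isOpen_ball hdiff (mem_ball_self hR)
      (fun w hw => (hmax w (mem_ball_zero_iff.mp hw).le).trans h2) hz
  have hp : DifferentiableOn ℂ p (ball 0 R) := (hdiff.div_const _).const_sub _
  have hp0 : 0 < ‖p 0‖ := norm_pos_iff.mpr (fun h => by simp [h] at h0)
  have hD : HasDerivAt p 0 α := by
    have := (((hN α hαΩ).differentiableAt.hasDerivAt).div_const (f α)).const_sub 1
    simpa [hd] using this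
  have hpα : p α = 0 := by simp [p, hfα]
  have hlo := (hasDerivAt_iff_isLittleO.mp hD).def (c := ‖p 0‖ / (4 * R)) (by positivity)
  obtain ⟨ε, hε, hb⟩ := Metric.eventually_nhds_iff.mp hlo
  obtain ⟨t, ht0, ht1, htε⟩ : ∃ t : ℝ, 0 < t ∧ t < 1 ∧ t * R < ε := by
    refine ⟨min (1 / 2) (ε / (2 * R)), by positivity,
      (min_le_left _ _).trans_lt (by norm_num), ?_⟩
    calc min (1 / 2) (ε / (2 * R)) * R ≤ ε / (2 * R) * R := by gcongr; exact min_le_right _ _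
      _ = ε / 2 := by field_simp
      _ < ε := by linarith
  have hzα : ‖((1 - t : ℝ) : ℂ) * α - α‖ = t * R := by
    have : ((1 - t : ℝ) : ℂ) * α - α = -((t : ℂ) * α) := by push_cast; ring
    rw [this, norm_neg, norm_mul, hα, Complex.norm_real, Real.norm_of_nonneg ht0.le]
  have hz : ‖((1 - t : ℝ) : ℂ) * α‖ = (1 - t) * R := by
    rw [norm_mul, hα, Complex.norm_real, Real.norm_of_nonneg (by linarith)]
  have h1 := hb (y := ((1 - t : ℝ) : ℂ) * α) (by rw [dist_eq_norm, hzα]; exact htε)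
  rw [hpα, smul_zero, sub_zero, sub_zero, hzα] at h1
  have h2 := harnack_aux R hR p hp hre h0 (((1 - t : ℝ) : ℂ) * α) (by rw [hz]; nlinarith)
  rw [hz] at h2
  have h3 : ‖p 0‖ / (4 * R) * (t * R) = ‖p 0‖ * t / 4 := by field_simp
  rw [h3] at h1
  have h4 := mul_le_mul_of_nonneg_left h1 (by positivity : 0 ≤ 2 * R)
  have h5 : 0 < R * t * ‖p 0‖ := by positivity
  nlinarith
end

section
/- (Anti-calculus proposition, minimum case) Let R > 0 and let f be analytic on an open set containing the closed disk D̄(0;R) = {z : |z| ≤ R}, with f non-constant on that open connected neighborhood. Suppose α ∈ ℂ with |α| = R is a point of minimum of |f| over D̄(0;R), i.e., |f(α)| ≤ |f(z)| for all z with |z| ≤ R. Then f(α) = 0 or f'(α) ≠ 0. -/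
theorem exists_dir (c : ℂ) (hc : c ≠ 0) (n : ℕ) (hn : 2 ≤ n) :
    ∃ w : ℂ, w.re < 0 ∧ (c * w ^ n).re < 0 := by
  have key : ∀ d : ℂ, d ≠ 0 → ∃ v : ℂ, 0 < v.re ∧ (d * v ^ n).re < 0 := by
    intro d hd
    have hn' : (2 : ℝ) ≤ n := by exact_mod_cast hn
    have hpi := Real.pi_pos
    have h1 := Complex.neg_pi_lt_arg d
    have h2 := Complex.arg_le_pi d
    obtain ⟨s, hs1, hs2, hs3⟩ : ∃ s : ℝ, -Real.pi < s ∧ s < Real.pi ∧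
        Real.cos (d.arg + s) < 0 := by
      by_cases h : 0 ≤ d.arg
      · refine ⟨3 * Real.pi / 4 - d.arg / 2, by linarith, by linarith, ?_⟩
        apply Real.cos_neg_of_pi_div_two_lt_of_lt <;> linarith
      · push Not at h
        refine ⟨-(3 * Real.pi / 4) - d.arg / 2, by linarith, by linarith, ?_⟩
        rw [← Real.cos_neg]
        apply Real.cos_neg_of_pi_div_two_lt_of_lt <;> linarith
    have hn0 : (0 : ℝ) < n := by linarith
    refine ⟨Complex.exp ((s / n : ℝ) * Complex.I), ?_, ?_⟩
    · rw [Complex.exp_ofReal_mul_I_re]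
      apply Real.cos_pos_of_mem_Ioo
      constructor
      · rw [lt_div_iff₀ hn0]; nlinarith
      · rw [div_lt_iff₀ hn0]; nlinarith
    · have : d * Complex.exp ((s / n : ℝ) * Complex.I) ^ n
          = (‖d‖ : ℂ) * Complex.exp ((d.arg + s : ℝ) * Complex.I) := by
        conv_lhs => rw [← Complex.norm_mul_exp_arg_mul_I d]
        rw [← Complex.exp_nat_mul, mul_assoc, ← Complex.exp_add]
        congr 2
        have : (n : ℂ) ≠ 0 := by exact_mod_cast hn0.ne'
        push_cast
        field_simp
      rw [this, Complex.re_ofReal_mul, Complex.exp_ofReal_mul_I_re]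
      exact mul_neg_of_pos_of_neg (norm_pos_iff.2 hd) hs3
  obtain ⟨v, hv, hv2⟩ := key (c * (-1) ^ n) (mul_ne_zero hc (pow_ne_zero _ (by norm_num)))
  refine ⟨-v, by simpa using hv, ?_⟩
  rwa [neg_pow v, ← mul_assoc]

open Metric in
/-- Anti-calculus proposition (minimum case): if `f` is analytic and non-constant
on an open connected set `Ω` containing the closed disk `D̄(0;R)` and `|f|`
attains its minimum over `D̄(0;R)` at a point `α` with `|α| = R`, then
`f(α) = 0` or `f'(α) ≠ 0`. -/
theorem anti_calculus_min (R : ℝ) (hR : 0 < R) (Ω : Set ℂ) (hΩ : IsOpen Ω)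
    (hconn : IsConnected Ω) (hsub : closedBall (0 : ℂ) R ⊆ Ω)
    (f : ℂ → ℂ) (hf : AnalyticOn ℂ f Ω)
    (hnc : ¬ ∃ c : ℂ, ∀ z ∈ Ω, f z = c)
    (α : ℂ) (hα : ‖α‖ = R)
    (hmin : ∀ z : ℂ, ‖z‖ ≤ R → ‖f α‖ ≤ ‖f z‖) :
    f α = 0 ∨ deriv f α ≠ 0 := by
  by_contra hcon
  push Not at hcon
  obtain ⟨hfα, hd⟩ := hcon
  have hαΩ : α ∈ Ω := hsub (by simp [hα])
  have hα0 : α ≠ 0 := by rw [← norm_pos_iff, hα]; exact hR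
  have hfn : AnalyticOnNhd ℂ f Ω := (hΩ.analyticOn_iff_analyticOnNhd).1 hf
  have hfa := hfn α hαΩ
  have hga : AnalyticAt ℂ (fun z => f z - f α) α := hfa.sub analyticAt_const
  have hne : ¬ ∀ᶠ z in nhds α, f z - f α = 0 := by
    intro h
    apply hnc
    refine ⟨f α, fun z hz => ?_⟩
    refine hfn.eqOn_of_preconnected_of_eventuallyEq (g := fun _ => f α)
      analyticOnNhd_const hconn.isPreconnected hαΩ ?_ hz
    filter_upwards [h] with z hz using sub_eq_zero.1 hz
  obtain ⟨n, g, hg, hg0, hfg⟩ := hga.exists_eventuallyEq_pow_smul_nonzero_iff.2 hne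
  have hn : 2 ≤ n := by
    by_contra hlt
    have h01 : n = 0 ∨ n = 1 := by omega
    rcases h01 with rfl | rfl
    · have := hfg.self_of_nhds
      simp at this
      exact hg0 this.symm
    · have h1 : HasDerivAt (fun z => f z - f α) 0 α := by
        have := hfa.differentiableAt.hasDerivAt.sub_const (f α)
        rwa [hd] at this
      have h2 : HasDerivAt (fun z => (z - α) ^ 1 • g z) (g α) α := by
        have := ((hasDerivAt_id α).sub_const α).mul hg.differentiableAt.hasDerivAt
        simpa [Pi.mul_def] using this
      exact hg0 ((h2.congr_of_eventuallyEq hfg).unique h1)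
  have hc : (starRingEnd ℂ) (f α) * α ^ n * g α ≠ 0 :=
    mul_ne_zero (mul_ne_zero (by simpa using hfα) (pow_ne_zero _ hα0)) hg0
  obtain ⟨w, hw, hw2⟩ := exists_dir _ hc n hn
  have hpath : Filter.Tendsto (fun t : ℝ => α + t * (α * w)) (nhds 0) (nhds α) := by
    have : Continuous (fun t : ℝ => α + t * (α * w)) := by fun_prop
    simpa using this.tendsto 0
  have hgp : Filter.Tendsto (fun t : ℝ => g (α + t * (α * w))) (nhds 0) (nhds (g α)) :=
    hg.continuousAt.tendsto.comp hpath
  have e1 := hpath.eventually hfg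
  have hid : Filter.Tendsto (fun t : ℝ => t ^ n) (nhds 0) (nhds 0) := by
    have := (continuous_pow n (M := ℝ)).tendsto 0
    simpa [show n ≠ 0 by omega] using this
  have hlim : Filter.Tendsto (fun t : ℝ =>
      2 * ((starRingEnd ℂ) (f α) * ((α * w) ^ n * g (α + t * (α * w)))).re
        + t ^ n * Complex.normSq ((α * w) ^ n * g (α + t * (α * w)))) (nhds 0)
      (nhds (2 * ((starRingEnd ℂ) (f α) * ((α * w) ^ n * g α)).re
        + 0 * Complex.normSq ((α * w) ^ n * g α))) := by
    refine Filter.Tendsto.add ?_ (hid.mul ?_)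
    · exact ((Complex.continuous_re.tendsto _).comp
        ((hgp.const_mul _).const_mul _)).const_mul 2
    · exact (Complex.continuous_normSq.tendsto _).comp (hgp.const_mul _)
  have e2 := hlim.eventually_lt_const (u := 0) (by
    have : (starRingEnd ℂ) (f α) * ((α * w) ^ n * g α)
      = (starRingEnd ℂ) (f α) * α ^ n * g α * w ^ n := by ring
    rw [this]; linarith)
  have hlim3 : Filter.Tendsto (fun t : ℝ => 2 * w.re + t * Complex.normSq w) (nhds 0)
      (nhds (2 * w.re)) := by
    have : Continuous (fun t : ℝ => 2 * w.re + t * Complex.normSq w) := by fun_prop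
    simpa using this.tendsto 0
  have e3 := hlim3.eventually_lt_const (u := 0) (by linarith)
  have eall := (e1.and (e2.and e3)).filter_mono (nhdsWithin_le_nhds (s := Set.Ioi (0:ℝ)))
  obtain ⟨t, ⟨h1, h2, h3⟩, ht⟩ := (eall.and self_mem_nhdsWithin).exists
  have ht : 0 < t := ht
  set z := α + t * (α * w) with hz
  have hzR : ‖z‖ ≤ R := by
    have : z = α * (1 + t * w) := by rw [hz]; ring
    rw [this, norm_mul, hα]
    have : ‖1 + t * w‖ ≤ 1 := by
      rw [← sq_le_one_iff₀ (norm_nonneg _), ← Complex.normSq_eq_norm_sq, Complex.normSq_apply]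
      rw [Complex.normSq_apply] at h3
      simp
      nlinarith
    nlinarith
  have hle := hmin z hzR
  set u := (α * w) ^ n * g z with hu
  have hfz : f z = f α + (t ^ n : ℝ) * u := by
    have : f z - f α = (z - α) ^ n * g z := h1
    rw [eq_add_of_sub_eq' this, hu, hz]
    push_cast
    ring
  have hsq : ‖f α‖ ^ 2 ≤ ‖f z‖ ^ 2 := by gcongr
  rw [← Complex.normSq_eq_norm_sq, ← Complex.normSq_eq_norm_sq, hfz] at hsq
  have htn : 0 < t ^ n := pow_pos ht n
  generalize t ^ n = T at *
  have hexp : Complex.normSq (f α + (T : ℝ) * u) = Complex.normSq (f α)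
      + T * (2 * ((starRingEnd ℂ) (f α) * u).re + T * Complex.normSq u) := by
    simp [Complex.normSq_apply]
    ring
  rw [hexp] at hsq
  nlinarith [mul_neg_of_pos_of_neg htn h2]
end

section
/- (Bak–Ding–Newman saddle point theorem) Let Ω ⊆ ℂ be open and connected, let f : Ω → ℂ be analytic and non-constant, and let z₀ ∈ Ω. Then z₀ is a saddle point of the real-valued function F(z) = |f(z)| — meaning F is real-differentiable at z₀ with zero (real Fréchet) derivative, and z₀ is neither a local maximum nor a local minimum of F — if and only if f'(z₀) = 0 and f(z₀) ≠ 0. -/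
/-- Bak–Ding–Newman saddle point theorem: for `f` analytic and non-constant on an
open connected set `Ω` and `z₀ ∈ Ω`, the point `z₀` is a saddle point of
`F = |f|` (i.e. `F` is real-differentiable at `z₀` with zero Fréchet derivative,
and `z₀` is neither a local maximum nor a local minimum of `F`) if and only if
`f'(z₀) = 0` and `f(z₀) ≠ 0`. -/
theorem bak_ding_newman_saddle (Ω : Set ℂ) (hΩ : IsOpen Ω) (hconn : IsConnected Ω)
    (f : ℂ → ℂ) (hf : AnalyticOn ℂ f Ω)
    (hnc : ¬ ∃ c : ℂ, ∀ z ∈ Ω, f z = c)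
    (z₀ : ℂ) (hz₀ : z₀ ∈ Ω) :
    (HasFDerivAt (fun z : ℂ => ‖f z‖) (0 : ℂ →L[ℝ] ℝ) z₀ ∧
        ¬ IsLocalMax (fun z : ℂ => ‖f z‖) z₀ ∧
        ¬ IsLocalMin (fun z : ℂ => ‖f z‖) z₀) ↔
      (deriv f z₀ = 0 ∧ f z₀ ≠ 0) := by
  have hN : AnalyticOnNhd ℂ f Ω := (hΩ.analyticOn_iff_analyticOnNhd).1 hf
  have hev : ¬ ∀ᶠ z in nhds z₀, f z = f z₀ := by
    intro h
    refine hnc ⟨f z₀, fun z hz => ?_⟩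
    exact hN.eqOn_of_preconnected_of_eventuallyEq (analyticOnNhd_const (v := f z₀))
      hconn.isPreconnected hz₀ h hz
  have hd : ∀ᶠ z in nhds z₀, DifferentiableAt ℂ f z := by
    filter_upwards [hΩ.mem_nhds hz₀] with z hz using (hN z hz).differentiableAt
  have hfd : HasFDerivAt f
      ((ContinuousLinearMap.toSpanSingleton ℂ (deriv f z₀)).restrictScalars ℝ) z₀ :=
    (hd.self_of_nhds.hasDerivAt.hasFDerivAt).restrictScalars ℝ
  constructor
  · rintro ⟨h1, -, h3⟩
    have hne : f z₀ ≠ 0 := by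
      intro h0
      apply h3
      refine Filter.Eventually.of_forall fun z => ?_
      simp [h0]
    refine ⟨?_, hne⟩
    by_contra hdne
    have e := (h1.pow 2).unique hfd.norm_sq
    have e2 := congrArg (fun L : ℂ →L[ℝ] ℝ => L (f z₀ / deriv f z₀)) e
    simp [hdne] at e2
    exact hne e2
  · rintro ⟨h1, hne⟩
    refine ⟨?_, ?_, ?_⟩
    · have hn : DifferentiableAt ℝ (fun w : ℂ => ‖w‖) (f z₀) :=
        differentiableAt_id.norm ℝ hne
      refine (hn.hasFDerivAt.comp z₀ hfd).congr_fderiv ?_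
      rw [h1]
      apply ContinuousLinearMap.ext
      intro v
      simp
    · intro h
      exact hev (Complex.eventually_eq_of_isLocalMax_norm hd h)
    · intro h
      rcases Complex.eventually_eq_or_eq_zero_of_isLocalMin_norm hd h with h | h
      · exact hev h
      · exact hne h
end

section
/- (Discrete Cauchy integral formula for polynomials) Let P be a complex polynomial, let n ≥ 1 be a natural number with n ≥ deg P, and let ω = e^{iπ/n}. Then for every z₀ ∈ ℂ, every z ∈ ℂ with z ≠ 0, and every j ∈ {0, 1, …, n}: P^{(j)}(z₀)/j! = (1/(2n)) ∑_{k=0}^{2n−1} P(ζ_k)/(ζ_k − z₀)^j, where ζ_k = z₀ + z ω^k. -/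
/-- Discrete Cauchy integral formula for polynomials: if `n ≥ 1`, `n ≥ deg P`,
`ω = e^{iπ/n}`, `z ≠ 0`, and `j ≤ n`, then with `ζ_k = z₀ + z ωᵏ`,
`P⁽ʲ⁾(z₀)/j! = (1/(2n)) ∑_{k=0}^{2n-1} P(ζ_k)/(ζ_k - z₀)^j`. -/
theorem discrete_cauchy_formula (P : Polynomial ℂ) (n : ℕ) (hn : 1 ≤ n)
    (hdeg : P.natDegree ≤ n) (ω : ℂ) (hω : ω = Complex.exp (Real.pi * Complex.I / n)) :
    ∀ z₀ z : ℂ, z ≠ 0 → ∀ j : ℕ, j ≤ n →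
      ((Polynomial.derivative^[j] P).eval z₀) / (Nat.factorial j : ℂ) =
        (1 / (2 * n : ℂ)) *
          ∑ k ∈ Finset.range (2 * n),
            P.eval (z₀ + z * ω ^ k) / ((z₀ + z * ω ^ k) - z₀) ^ j := by
  intro z₀ z hz j hj
  have hn0 : (n : ℂ) ≠ 0 := by
    have : n ≠ 0 := by omega
    exact_mod_cast this
  have hprim : IsPrimitiveRoot ω (2 * n) := by
    have h := Complex.isPrimitiveRoot_exp (2 * n) (by omega)
    have e : (2 * Real.pi * Complex.I / ((2 * n : ℕ) : ℂ) : ℂ) = Real.pi * Complex.I / n := by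
      push_cast
      field_simp
    rw [e, ← hω] at h
    exact h
  have hω0 : ω ≠ 0 := by
    rw [hω]
    exact Complex.exp_ne_zero _
  have hL : ((Polynomial.derivative^[j] P).eval z₀) / (Nat.factorial j : ℂ)
      = (Polynomial.taylor z₀ P).coeff j := by
    have hf : (Nat.factorial j : ℂ) ≠ 0 := by exact_mod_cast Nat.factorial_ne_zero j
    rw [Polynomial.taylor_coeff, ← Polynomial.factorial_smul_hasseDeriv]
    simp
    field_simp
  have hterm : ∀ k ∈ Finset.range (2 * n),
      P.eval (z₀ + z * ω ^ k) / ((z₀ + z * ω ^ k) - z₀) ^ j =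
      ∑ i ∈ Finset.range (n + 1),
        (Polynomial.taylor z₀ P).coeff i * (z ^ i / z ^ j) * (ω ^ i / ω ^ j) ^ k := by
    intro k _
    rw [add_comm z₀, ← Polynomial.taylor_eval, add_sub_cancel_right,
      Polynomial.eval_eq_sum_range' (n := n + 1)
        (by rw [Polynomial.natDegree_taylor]; omega), Finset.sum_div]
    refine Finset.sum_congr rfl fun i _ => ?_
    rw [mul_pow, mul_pow, div_pow, ← pow_mul, ← pow_mul, ← pow_mul, ← pow_mul,
      mul_comm k i, mul_comm k j]
    field_simp
  rw [hL, Finset.sum_congr rfl hterm, Finset.sum_comm]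
  rw [Finset.sum_eq_single j]
  · rw [div_self (pow_ne_zero _ hω0), div_self (pow_ne_zero _ hz)]
    simp
    field_simp
  · intro i hi hij
    have hi' : i < n + 1 := Finset.mem_range.mp hi
    rw [← Finset.mul_sum]
    have hq : ω ^ i / ω ^ j ≠ 1 := by
      intro h
      rw [div_eq_one_iff_eq (pow_ne_zero _ hω0)] at h
      exact hij (hprim.pow_inj (by omega) (by omega) h)
    rw [geom_sum_eq hq, div_pow, ← pow_mul, ← pow_mul, mul_comm i, mul_comm j, pow_mul ω _ i, pow_mul ω _ j,
      hprim.pow_eq_one]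
    simp
  · intro h
    exact absurd (Finset.mem_range.mpr (by omega)) h
end

section
/- (Hurwitz; Read; Connell–Porcelli) Let f be analytic on the open unit disk D(0;1) = {z ∈ ℂ : |z| < 1}, i.e., around every point of D(0;1) it is given by a convergent power series. Then there exists a sequence a : ℕ → ℂ such that for every z with |z| < 1 the series ∑_{n=0}^∞ a_n z^n converges to f(z). -/
open Metric in
/-- Hurwitz; Read; Connell–Porcelli: a function analytic on the open unit disk
is represented there by a single power series centered at `0`. -/
theorem analytic_eq_power_series_on_unit_disk (f : ℂ → ℂ)
    (hf : AnalyticOn ℂ f (ball (0 : ℂ) 1)) :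
    ∃ a : ℕ → ℂ, ∀ z : ℂ, ‖z‖ < 1 → HasSum (fun n : ℕ => a n * z ^ n) (f z) := by
  refine ⟨fun n => (n.factorial : ℂ)⁻¹ * iteratedDeriv n f 0, fun z hz => ?_⟩
  have h := Complex.hasSum_taylorSeries_on_ball hf.differentiableOn
    (z := z) (mem_ball_zero_iff.mpr hz)
  have e : (fun n : ℕ => (n.factorial : ℂ)⁻¹ * iteratedDeriv n f 0 * z ^ n) =
      fun n : ℕ => (n.factorial : ℂ)⁻¹ • (z - 0) ^ n • iteratedDeriv n f 0 := by
    funext n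
    simp only [sub_zero, smul_eq_mul]
    ring
  rw [← e] at h
  exact h
end

section
/- (Clunie–Jack lemma) Let f be analytic on an open set containing the closed unit disk D̄(0;1), non-constant on D̄(0;1), and satisfying |f(z)| ≤ 1 for all |z| ≤ 1. Suppose α ∈ ℂ with |α| = 1 is a point of maximum of |f| over D̄(0;1), i.e., |f(z)| ≤ |f(α)| for all |z| ≤ 1. Then the complex number α f'(α)/f(α) is a real number and is strictly positive. If moreover f(0) = 0, then α f'(α)/f(α) is a real number greater than or equal to 1. -/
open Metric Set in
/-- one-sided maximum at the right endpoint gives nonnegative derivative -/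
lemma cj_deriv_nonneg (u : ℝ → ℝ) (u' : ℝ) (h : HasDerivAt u u' 1)
    (hu : ∀ r ∈ Ioo (0 : ℝ) 1, u r ≤ u 1) : 0 ≤ u' := by
  have h1 := (hasDerivWithinAt_iff_tendsto_slope' (s := Iio (1 : ℝ)) (by simp)).1
    (h.hasDerivWithinAt (s := Iio (1 : ℝ)))
  refine ge_of_tendsto h1 ?_
  filter_upwards [Ioo_mem_nhdsLT (show (0 : ℝ) < 1 by norm_num)] with r hr
  rw [slope_def_field]
  exact div_nonneg_of_nonpos (by linarith [hu r hr]) (by linarith [hr.2])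

open Metric Set in
lemma cj_schwarz (h : ℂ → ℂ) (hd : DifferentiableOn ℂ h (ball 0 1)) (c : ℂ)
    (hc : HasDerivAt h c 1) (h0 : h 0 = 0) (hb : MapsTo h (ball 0 1) (ball 0 1))
    (h1 : ‖h 1‖ = 1) : 1 ≤ (c / h 1).re := by
  have hne : h 1 ≠ 0 := by
    intro hh
    simp [hh] at h1
  have hk : HasDerivAt (fun z => h z / h 1) (c / h 1) ((1 : ℝ) : ℂ) := by
    simpa using hc.div_const (h 1)
  have hk2 := hk.real_of_complex.sub (hasDerivAt_id (1 : ℝ))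
  have := cj_deriv_nonneg _ _ hk2 (by
    intro r hr
    have hs := Complex.norm_le_norm_of_mapsTo_ball (z := (r : ℂ)) (R := 1) hd
      (hb.mono_right ball_subset_closedBall) h0
      (by simpa [abs_of_pos hr.1] using hr.2)
    have h3 : (h r / h 1).re ≤ r := by
      refine (Complex.re_le_norm _).trans ?_
      rw [norm_div, h1, div_one]
      simpa [abs_of_pos hr.1] using hs
    simp only [Pi.sub_apply, id, Complex.ofReal_one, div_self hne, Complex.one_re]
    linarith)
  linarith

lemma cj_mobius_norm (a w : ℂ) (ha : ‖a‖ < 1) (hw : ‖w‖ < 1) :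
    ‖w - a‖ < ‖1 - starRingEnd ℂ a * w‖ := by
  have e1 : ‖a‖ ^ 2 < 1 := by nlinarith [norm_nonneg a]
  have e2 : ‖w‖ ^ 2 < 1 := by nlinarith [norm_nonneg w]
  refine lt_of_pow_lt_pow_left₀ 2 (norm_nonneg _) ?_
  rw [Complex.sq_norm, Complex.normSq_apply] at *
  rw [Complex.sq_norm, Complex.normSq_apply] at *
  simp
  nlinarith [mul_pos (sub_pos.2 e1) (sub_pos.2 e2)]

open Metric Set in
lemma cj_core (g : ℂ → ℂ) (hd : DifferentiableOn ℂ g (ball 0 1)) (c : ℂ)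
    (hc : HasDerivAt g c 1) (hlt : MapsTo g (ball 0 1) (ball 0 1))
    (hle : ∀ z, ‖z‖ ≤ 1 → ‖g z‖ ≤ 1) (h1 : g 1 = 1) :
    (c.im = 0 ∧ 0 < c.re) ∧ (g 0 = 0 → 1 ≤ c.re) := by
  have him : c.im = 0 := by
    have e1 : HasDerivAt (fun z : ℂ => Complex.exp (z * Complex.I)) Complex.I ((0 : ℝ) : ℂ) := by
      have := ((hasDerivAt_id ((0 : ℝ) : ℂ)).mul_const Complex.I).cexp
      simpa using this
    have e2 : HasDerivAt (fun z : ℂ => g (Complex.exp (z * Complex.I))) (c * Complex.I)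
        ((0 : ℝ) : ℂ) := by
      refine HasDerivAt.comp _ ?_ e1
      simpa using hc
    have e3 := e2.real_of_complex
    have e4 : IsLocalMax (fun x : ℝ => (g (Complex.exp (x * Complex.I))).re) 0 := by
      refine Filter.Eventually.of_forall fun x => ?_
      refine (Complex.re_le_norm _).trans ?_
      refine (hle _ (by simp [Complex.norm_exp_ofReal_mul_I])).trans ?_
      simp [h1]
    have := e4.hasDerivAt_eq_zero e3
    simpa using this
  refine ⟨⟨him, ?_⟩, fun h0 => ?_⟩
  · have ha : ‖g 0‖ < 1 := by simpa using hlt (x := 0) (by simp)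
    set a := g 0 with hadef
    have hden : ∀ w : ℂ, ‖w‖ ≤ 1 → 1 - starRingEnd ℂ a * w ≠ 0 := by
      intro w hw hh
      have : ‖starRingEnd ℂ a * w‖ = 1 := by rw [← sub_eq_zero.1 hh]; simp
      rw [norm_mul, RCLike.norm_conj] at this
      nlinarith [norm_nonneg a, norm_nonneg w]
    have h1a : 1 - a ≠ 0 := by
      intro hh
      rw [← sub_eq_zero.1 hh] at ha
      simp at ha
    have h1a' : 1 - starRingEnd ℂ a ≠ 0 := by simpa using hden 1 (by simp)
    have key := cj_schwarz (fun z => (g z - a) / (1 - starRingEnd ℂ a * g z))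
      ((hd.sub_const a).div ((hd.const_mul _).const_sub 1)
        (fun z hz => hden _ (hle z (by simpa using (mem_ball.1 hz).le)))) _
      ((hc.sub_const a).div ((hc.const_mul (starRingEnd ℂ a)).const_sub 1)
        (by simpa [h1] using h1a'))
      (by simp [hadef])
      (by
        intro z hz
        have hz' : ‖g z‖ < 1 := by simpa using hlt hz
        have := cj_mobius_norm a (g z) ha hz'
        simp only [mem_ball_zero_iff, norm_div]
        exact (div_lt_one (lt_of_le_of_lt (norm_nonneg _) this)).2 this)
      (by
        have : ‖1 - starRingEnd ℂ a‖ = ‖1 - a‖ := by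
          rw [← RCLike.norm_conj (1 - a)]; simp
        simp only [h1, mul_one, norm_div, this]
        exact div_self (by simpa using h1a))
    simp only [h1, mul_one] at key
    have hns : 0 < Complex.normSq (1 - a) := Complex.normSq_pos.2 h1a
    have hcc : c = (c.re : ℂ) := by apply Complex.ext <;> simp [him]
    have heq : (c * (1 - starRingEnd ℂ a) - (1 - a) * -(starRingEnd ℂ a * c)) /
        (1 - starRingEnd ℂ a) ^ 2 / ((1 - a) / (1 - starRingEnd ℂ a)) =
        ((c.re * (1 - Complex.normSq a) / Complex.normSq (1 - a) : ℝ) : ℂ) := by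
      push_cast
      rw [← hcc, Complex.normSq_eq_conj_mul_self, Complex.normSq_eq_conj_mul_self, map_sub, map_one]
      field_simp
      ring
    rw [heq, Complex.ofReal_re] at key
    have hna : Complex.normSq a < 1 := by
      rw [Complex.normSq_eq_norm_sq]; nlinarith [norm_nonneg a]
    rw [le_div_iff₀ hns] at key
    by_contra hcon
    nlinarith
  · simpa [h1] using cj_schwarz g hd c hc h0 hlt (by simp [h1])


open Metric in
/-- Clunie–Jack lemma: let `f` be analytic on an open set containing the closed
unit disk, non-constant on the closed unit disk, with `‖f‖ ≤ 1` there, and let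
`α` with `‖α‖ = 1` be a maximum point of `‖f‖` over the closed disk. Then
`α f'(α)/f(α)` is a strictly positive real number; if moreover `f 0 = 0`, it is
a real number `≥ 1`. -/
theorem clunie_jack (Ω : Set ℂ) (hΩ : IsOpen Ω) (hsub : closedBall (0 : ℂ) 1 ⊆ Ω)
    (f : ℂ → ℂ) (hf : AnalyticOn ℂ f Ω)
    (hnc : ¬ ∃ c : ℂ, ∀ z ∈ closedBall (0 : ℂ) 1, f z = c)
    (hb : ∀ z : ℂ, ‖z‖ ≤ 1 → ‖f z‖ ≤ 1)
    (α : ℂ) (hα : ‖α‖ = 1)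
    (hmax : ∀ z : ℂ, ‖z‖ ≤ 1 → ‖f z‖ ≤ ‖f α‖) :
    ((α * deriv f α / f α).im = 0 ∧ 0 < (α * deriv f α / f α).re) ∧
      (f 0 = 0 → 1 ≤ (α * deriv f α / f α).re) := by
  have hdf : ∀ z : ℂ, ‖z‖ ≤ 1 → DifferentiableAt ℂ f z := fun z hz =>
    (hf.differentiableOn z (hsub (by simpa using hz))).differentiableAt
      (hΩ.mem_nhds (hsub (by simpa using hz)))
  have hne : f α ≠ 0 := by
    intro h0
    refine hnc ⟨0, fun z hz => ?_⟩
    have := hmax z (by simpa using hz)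
    rw [h0, norm_zero] at this
    exact norm_le_zero_iff.1 this
  have hstrict : ∀ z : ℂ, ‖z‖ < 1 → ‖f z‖ < ‖f α‖ := by
    intro z hz
    refine lt_of_le_of_ne (hmax z hz.le) fun heq => hnc ⟨f z, fun w hw => ?_⟩
    have hcl : closure (ball (0 : ℂ) 1) = closedBall 0 1 := closure_ball _ one_ne_zero
    have hD : DiffContOnCl ℂ f (ball 0 1) := by
      refine DifferentiableOn.diffContOnCl fun x hx => ?_
      rw [hcl] at hx
      exact (hdf x (by simpa using hx)).differentiableWithinAt
    have := Complex.eqOn_closure_of_isPreconnected_of_isMaxOn_norm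
      (convex_ball (0 : ℂ) 1).isPreconnected isOpen_ball hD (c := z) (by simpa using hz)
      (fun x hx => by
        have hx' : ‖x‖ < 1 := by simpa using hx
        simpa [heq] using hmax x hx'.le)
    exact this (by rwa [hcl])
  have hfα : 0 < ‖f α‖ := norm_pos_iff.2 hne
  have hc : HasDerivAt (fun z => f (α * z) / f α) (α * deriv f α / f α) 1 := by
    have h1 : HasDerivAt (fun z : ℂ => α * z) α 1 := by
      simpa using (hasDerivAt_id (1 : ℂ)).const_mul α
    have h2 : HasDerivAt f (deriv f α) (α * 1) := by
      simpa using (hdf α hα.le).hasDerivAt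
    have := (h2.comp (1 : ℂ) h1).div_const (f α)
    rw [mul_comm α]
    exact this
  have := cj_core (fun z => f (α * z) / f α)
    (fun z hz => by
      have hz' : ‖z‖ < 1 := by simpa using hz
      have h2 : DifferentiableAt ℂ f (α * z) := hdf _ (by simp [hα, hz'.le])
      exact ((h2.comp z (differentiableAt_id.const_mul α)).div_const _).differentiableWithinAt)
    _ hc
    (fun z hz => by
      have hz' : ‖z‖ < 1 := by simpa using hz
      simp only [mem_ball_zero_iff, norm_div]
      exact (div_lt_one hfα).2 (hstrict _ (by simpa [hα] using hz')))
    (fun z hz => by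
      simp only [norm_div]
      exact (div_le_one hfα).2 (hmax _ (by simpa [hα] using hz)))
    (by simp [hne])
  exact ⟨this.1, fun h0 => this.2 (by simp [h0])⟩
end

section
/- (Gutzmer–Parseval inequality for Laurent series) Let 0 ≤ r₁ < r₂ ≤ ∞, let a : ℤ → ℂ, and let f be defined on the annulus {z : r₁ < |z| < r₂} by f(z) = ∑_{j=−∞}^{+∞} a_j z^j, where for each such z both the series ∑_{n=0}^∞ a_n z^n and ∑_{m=1}^∞ a_{−m} z^{−m} converge and their sum is f(z). Let r satisfy r₁ < r < r₂ and let M be a real number with |f(z)| ≤ M for all z with |z| = r. Then ∑_{j=−∞}^{+∞} |a_j|² r^{2j} ≤ M² (the sum over all integers j, with r^{2j} the integer power of r). -/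
/-- Gutzmer–Parseval inequality for Laurent series: let `0 ≤ r₁ < r₂ ≤ ∞` and
let `f(z) = ∑_{j ∈ ℤ} a_j z^j` on the annulus `{z : r₁ < ‖z‖ < r₂}`. If
`r₁ < r < r₂` and `‖f(z)‖ ≤ M` on the circle `‖z‖ = r`, then
`∑_{j ∈ ℤ} ‖a_j‖² r^{2j} ≤ M²`. -/
theorem gutzmer_parseval_laurent (r₁ r₂ : ENNReal) (h12 : r₁ < r₂)
    (a : ℤ → ℂ) (f : ℂ → ℂ)
    (hf : ∀ z : ℂ, r₁ < ‖z‖₊ → (‖z‖₊ : ENNReal) < r₂ →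
      HasSum (fun j : ℤ => a j * z ^ j) (f z))
    (r : ℝ) (hr1 : r₁ < ENNReal.ofReal r) (hr2 : ENNReal.ofReal r < r₂)
    (M : ℝ) (hM : ∀ z : ℂ, ‖z‖ = r → ‖f z‖ ≤ M) :
    ∑' j : ℤ, ‖a j‖ ^ 2 * r ^ (2 * j) ≤ M ^ 2 := by
  have : Fact (0 < (1 : ℝ)) := ⟨one_pos⟩
  have hr : 0 < r := ENNReal.ofReal_pos.1 (lt_of_le_of_lt (zero_le) hr1)
  have key : ∀ z : ℂ, ‖z‖ = r → HasSum (fun j : ℤ => a j * z ^ j) (f z) := by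
    intro z hz
    have h : (‖z‖₊ : ENNReal) = ENNReal.ofReal r := by
      rw [← hz, ofReal_norm, enorm_eq_nnnorm]
    exact hf z (h ▸ hr1) (h ▸ hr2)
  have hrn : ‖(r : ℂ)‖ = r := by simp [abs_of_pos hr]
  set c : ℤ → ℂ := fun j => a j * (r : ℂ) ^ j with hc
  have hcs : Summable (fun j => ‖c j‖) := (key r hrn).summable.norm
  have hM0 : 0 ≤ M := (norm_nonneg _).trans (hM r hrn)
  have hs : Summable (fun j : ℤ => c j • (fourier j : C(AddCircle (1 : ℝ), ℂ))) := by
    apply Summable.of_norm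
    simpa [norm_smul, fourier_norm] using hcs
  obtain ⟨g, hg⟩ := hs
  have hgM : ‖g‖ ≤ M := by
    rw [ContinuousMap.norm_le _ hM0]
    intro x
    have h1 : HasSum (fun j : ℤ => c j * (fourier j x : ℂ)) (g x) := by
      simpa using (ContinuousMap.evalCLM ℂ x).hasSum hg
    have hz : ‖(r : ℂ) * (AddCircle.toCircle x : ℂ)‖ = r := by
      rw [norm_mul, hrn, Circle.norm_coe, mul_one]
    have h2 := key _ hz
    have h3 : g x = f ((r : ℂ) * (AddCircle.toCircle x : ℂ)) := by
      refine h1.unique ?_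
      convert h2 using 2 with j
      rw [fourier_apply, AddCircle.toCircle_zsmul, mul_zpow, hc]
      push_cast
      ring
    rw [h3]
    exact hM _ hz
  let L := ContinuousMap.toLp (E := ℂ) 2 (AddCircle.haarAddCircle (T := (1 : ℝ))) ℂ
  have hF : HasSum (fun j : ℤ => c j • (fourierLp 2 j : MeasureTheory.Lp ℂ 2 (AddCircle.haarAddCircle (T := (1 : ℝ))))) (L g) := by
    simpa [fourierLp, L] using L.hasSum hg
  have ho := orthonormal_fourier (T := (1 : ℝ))
  have hin : ∀ n : ℤ, inner ℂ (fourierLp (T := (1 : ℝ)) 2 n) (L g) = c n := by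
    intro n
    have h1 := (innerSL ℂ (fourierLp (T := (1 : ℝ)) 2 n)).hasSum hF
    refine h1.unique ?_
    have h2 := hasSum_ite_eq n (c n)
    refine Eq.mpr (congrArg (fun u => HasSum u (c n)) (funext fun j => ?_)) h2
    rw [innerSL_apply_apply, inner_smul_right, orthonormal_iff_ite.1 ho n j]
    by_cases h : n = j
    · subst h; simp
    · simp [h, Ne.symm h]
  have hb := ho.tsum_inner_products_le (L g)
  have hLn : ‖L g‖ ≤ M := by
    have h1 : ‖L‖ ≤ 1 := by
      refine (ContinuousMap.toLp_norm_le (E := ℂ) (𝕜 := ℂ) (p := 2) (μ := AddCircle.haarAddCircle (T := (1 : ℝ)))).trans ?_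
      simp [MeasureTheory.measureUnivNNReal]
    calc ‖L g‖ ≤ 1 * ‖g‖ := L.le_of_opNorm_le h1 g
      _ ≤ M := by rwa [one_mul]
  have he : ∀ j : ℤ, ‖a j‖ ^ 2 * r ^ (2 * j) = ‖inner ℂ (fourierLp (T := (1 : ℝ)) 2 j) (L g)‖ ^ 2 := by
    intro j
    rw [hin, hc]
    simp only [norm_mul, norm_zpow, hrn, mul_pow]
    rw [mul_comm 2 j, zpow_mul]
    norm_cast
  simp_rw [he]
  exact hb.trans (pow_le_pow_left₀ (norm_nonneg _) hLn 2)
end
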